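/- arXiv:1806.03332 — 2 statements merged into one kernel-verified Lean document; each statement's English description precedes it below -/
import Mathlib

section
/- Let 𝒰, 𝒳, 𝒴 be nonempty finite sets, α ∈ (1,∞), W a channel from 𝒳 to 𝒴, P_U a probability mass function on 𝒰, and V a channel from 𝒰 to 𝒳. Let P_{UY}(u,y) = P_U(u)·∑_{x∈𝒳} V(x|u)W(y|x) be the induced joint pmf on 𝒰×𝒴. Then the Arimoto mutual information I_α^A of P_{UY} satisfies I_α^A(U;Y) ≤ sup over all probability mass functions Q on 𝒳 of I_α^S(Q, W), where I_α^S is the Sibson mutual information of order α. -/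
open Real BigOperators

/-- A probability mass function on a finite set: nonnegative and sums to 1. -/
def IsPMF {X : Type} [Fintype X] (P : X → ℝ) : Prop :=
  (∀ x, 0 ≤ P x) ∧ ∑ x, P x = 1

/-- Sibson mutual information of order α of input pmf `Q` and channel `W`. -/
noncomputable def sibsonMI (α : ℝ) {X Y : Type} [Fintype X] [Fintype Y]
    (Q : X → ℝ) (W : X → Y → ℝ) : ℝ :=
  (α / (α - 1)) * Real.log (∑ y, (∑ x, Q x * W x y ^ α) ^ (1 / α))

/-- Arimoto mutual information of order α of a joint pmf `P` on `U × Y`,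
with `U`-marginal `u ↦ ∑ y, P u y`. -/
noncomputable def arimotoMI (α : ℝ) {U Y : Type} [Fintype U] [Fintype Y]
    (P : U → Y → ℝ) : ℝ :=
  (α / (α - 1)) * Real.log
    ((∑ y, (∑ u, P u y ^ α) ^ (1 / α)) / (∑ u, (∑ y, P u y) ^ α) ^ (1 / α))

/-!
Arimoto's information of the input `P` over a channel `K` is Sibson's information of the escort
distribution, proportional to `P ^ α`, over the same `K`: dividing by `(∑ u, P u ^ α) ^ (1 / α)`
amounts to normalizing the weights. For `K` the composition of `V` and `W`, Jensen's inequality for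
the convex function `t ↦ t ^ α` moves the mixing by `V` out of the power and onto the input, so
Sibson's information does not decrease when `V` is absorbed into the input distribution. What
results is Sibson's information of a single input distribution over `W`, and these are all bounded
by `log |Y|`.
-/

/-- The escort distribution of order `α` of `P`, the pmf proportional to `P ^ α`. It turns Arimoto's
information into Sibson's. -/
noncomputable def escort (α : ℝ) {U : Type*} [Fintype U] (P : U → ℝ) (u : U) : ℝ :=
  P u ^ α / ∑ v, P v ^ α

/-- The distribution at the output of the channel `W` when its input is distributed as `P`. Applied
to each row of a channel `V`, as in `fun u => channelOutput (V u) W`, it is the composition of the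
channels `V` and `W`. -/
def channelOutput {X Y : Type*} [Fintype X] (P : X → ℝ) (W : X → Y → ℝ) (y : Y) : ℝ :=
  ∑ x, P x * W x y

/-- The argument of the logarithm in Sibson's information of order `α`, which carries its
inequalities before the logarithm is taken. -/
noncomputable def sibsonSum (α : ℝ) {X Y : Type*} [Fintype X] [Fintype Y]
    (Q : X → ℝ) (W : X → Y → ℝ) : ℝ :=
  ∑ y, (∑ x, Q x * W x y ^ α) ^ (1 / α)

section Channel

variable {U X Y : Type*} [Fintype U] [Fintype X]

theorem channelOutput_nonneg {P : X → ℝ} {W : X → Y → ℝ} (hP : ∀ x, 0 ≤ P x)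
    (hW : ∀ x y, 0 ≤ W x y) (y : Y) : 0 ≤ channelOutput P W y :=
  Finset.sum_nonneg fun x _ => mul_nonneg (hP x) (hW x y)

theorem sum_channelOutput [Fintype Y] (P : X → ℝ) {W : X → Y → ℝ} (hW : ∀ x, ∑ y, W x y = 1) :
    ∑ y, channelOutput P W y = ∑ x, P x := by
  simp only [channelOutput]
  rw [Finset.sum_comm]
  simp only [← Finset.mul_sum, hW, mul_one]

theorem channelOutput_assoc (P : U → ℝ) (V : U → X → ℝ) (W : X → Y → ℝ) (y : Y) :
    channelOutput P (fun u => channelOutput (V u) W) y =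
      channelOutput (channelOutput P V) W y := by
  simp only [channelOutput, Finset.mul_sum, Finset.sum_mul, mul_assoc]
  exact Finset.sum_comm

theorem sum_mul_rpow_nonneg (α : ℝ) {P w : X → ℝ} (hP : ∀ x, 0 ≤ P x)
    (hw : ∀ x, 0 ≤ w x) : 0 ≤ ∑ x, P x * w x ^ α :=
  Finset.sum_nonneg fun x _ => mul_nonneg (hP x) (rpow_nonneg (hw x) α)

theorem sum_escort_mul_rpow {P w : U → ℝ} (α : ℝ) (hP : ∀ u, 0 ≤ P u) (hw : ∀ u, 0 ≤ w u) :
    ∑ u, escort α P u * w u ^ α = (∑ u, (P u * w u) ^ α) / ∑ u, P u ^ α := by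
  rw [Finset.sum_div]
  refine Finset.sum_congr rfl fun u _ => ?_
  rw [escort, mul_rpow (hP u) (hw u), div_mul_eq_mul_div]

end Channel

section MutualInformation

variable {U X Y : Type} [Fintype U] [Fintype X] [Fintype Y] {α : ℝ}

namespace IsPMF

theorem exists_pos {P : X → ℝ} (hP : IsPMF P) : ∃ x, 0 < P x := by
  have sum_pos : 0 < ∑ x, P x := hP.2 ▸ one_pos
  obtain ⟨x, -, hx⟩ := (Finset.sum_pos_iff_of_nonneg fun x _ => hP.1 x).1 sum_pos
  exact ⟨x, hx⟩

theorem le_one {P : X → ℝ} (hP : IsPMF P) (x : X) : P x ≤ 1 :=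
  (Finset.single_le_sum (fun i _ => hP.1 i) (Finset.mem_univ x)).trans_eq hP.2

theorem channelOutput {P : X → ℝ} {W : X → Y → ℝ} (hP : IsPMF P) (hW : ∀ x, IsPMF (W x)) :
    IsPMF (channelOutput P W) :=
  ⟨channelOutput_nonneg hP.1 fun x => (hW x).1,
    (sum_channelOutput P fun x => (hW x).2).trans hP.2⟩

theorem sum_rpow_pos {P : U → ℝ} (hP : IsPMF P) (α : ℝ) : 0 < ∑ u, P u ^ α := by
  obtain ⟨u, hu⟩ := hP.exists_pos
  exact Finset.sum_pos' (fun v _ => rpow_nonneg (hP.1 v) α)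
    ⟨u, Finset.mem_univ u, rpow_pos_of_pos hu α⟩

theorem escort {P : U → ℝ} (hP : IsPMF P) (α : ℝ) : IsPMF (escort α P) := by
  refine ⟨fun u => div_nonneg (rpow_nonneg (hP.1 u) α) (hP.sum_rpow_pos α).le, ?_⟩
  simp only [_root_.escort]
  rw [← Finset.sum_div, div_self (hP.sum_rpow_pos α).ne']

end IsPMF

theorem sibsonMI_eq_log_sibsonSum (α : ℝ) (Q : X → ℝ) (W : X → Y → ℝ) :
    sibsonMI α Q W = α / (α - 1) * log (sibsonSum α Q W) :=
  rfl

theorem sibsonSum_pos (α : ℝ) {Q : X → ℝ} {W : X → Y → ℝ} (hQ : IsPMF Q)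
    (hW : ∀ x, IsPMF (W x)) : 0 < sibsonSum α Q W := by
  obtain ⟨x, hx⟩ := hQ.exists_pos
  obtain ⟨y, hy⟩ := (hW x).exists_pos
  have inner_pos : 0 < ∑ x, Q x * W x y ^ α :=
    Finset.sum_pos' (fun x _ => mul_nonneg (hQ.1 x) (rpow_nonneg ((hW x).1 y) α))
      ⟨x, Finset.mem_univ x, mul_pos hx (rpow_pos_of_pos hy α)⟩
  exact Finset.sum_pos'
    (fun y _ => rpow_nonneg (sum_mul_rpow_nonneg α hQ.1 fun x => (hW x).1 y) _)
    ⟨y, Finset.mem_univ y, rpow_pos_of_pos inner_pos _⟩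

theorem sibsonSum_rpow_le_card_rpow {Q : X → ℝ} {W : X → Y → ℝ} (hα : 1 ≤ α) (hQ : IsPMF Q)
    (hW : ∀ x, IsPMF (W x)) :
    sibsonSum α Q W ^ α ≤ (Fintype.card Y : ℝ) ^ (α - 1) := by
  have inner_nonneg : ∀ y, 0 ≤ ∑ x, Q x * W x y ^ α :=
    fun y => sum_mul_rpow_nonneg α hQ.1 fun x => (hW x).1 y
  have sum_inner_le_one : ∑ y, ∑ x, Q x * W x y ^ α ≤ 1 := by
    refine (Finset.sum_le_sum fun y _ => Finset.sum_le_sum fun x _ => ?_).trans_eq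
      (hQ.channelOutput hW).2
    exact mul_le_mul_of_nonneg_left
      (rpow_le_self_of_le_one ((hW x).1 y) ((hW x).le_one y) hα) (hQ.1 x)
  calc sibsonSum α Q W ^ α
      ≤ (Fintype.card Y : ℝ) ^ (α - 1) * ∑ y, ((∑ x, Q x * W x y ^ α) ^ (1 / α)) ^ α :=
        rpow_sum_le_const_mul_sum_rpow_of_nonneg Finset.univ hα
          fun y _ => rpow_nonneg (inner_nonneg y) _
    _ = (Fintype.card Y : ℝ) ^ (α - 1) * ∑ y, ∑ x, Q x * W x y ^ α := by
        simp only [one_div, rpow_inv_rpow (inner_nonneg _) (zero_lt_one.trans_le hα).ne']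
    _ ≤ (Fintype.card Y : ℝ) ^ (α - 1) :=
        mul_le_of_le_one_right (by positivity) sum_inner_le_one

theorem sibsonMI_le_log_card {Q : X → ℝ} {W : X → Y → ℝ} (hα : 1 < α) (hQ : IsPMF Q)
    (hW : ∀ x, IsPMF (W x)) :
    sibsonMI α Q W ≤ log (Fintype.card Y) := by
  have sum_pos : 0 < sibsonSum α Q W := sibsonSum_pos α hQ hW
  obtain ⟨x, -⟩ := hQ.exists_pos
  obtain ⟨y, -⟩ := (hW x).exists_pos
  have card_pos : (0 : ℝ) < Fintype.card Y := Nat.cast_pos.2 (Fintype.card_pos_iff.2 ⟨y⟩)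
  have log_le := log_le_log (rpow_pos_of_pos sum_pos α) (sibsonSum_rpow_le_card_rpow hα.le hQ hW)
  rw [log_rpow sum_pos, log_rpow card_pos] at log_le
  rwa [sibsonMI_eq_log_sibsonSum, div_mul_eq_mul_div, div_le_iff₀' (sub_pos.2 hα)]

theorem sibsonSum_comp_le {P : U → ℝ} {V : U → X → ℝ} {W : X → Y → ℝ} (hα : 1 ≤ α)
    (hP : ∀ u, 0 ≤ P u) (hV : ∀ u, IsPMF (V u)) (hW : ∀ x y, 0 ≤ W x y) :
    sibsonSum α P (fun u => channelOutput (V u) W) ≤ sibsonSum α (channelOutput P V) W := by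
  have comp_nonneg : ∀ u y, 0 ≤ channelOutput (V u) W y :=
    fun u => channelOutput_nonneg (hV u).1 hW
  refine Finset.sum_le_sum fun y _ => rpow_le_rpow
    (sum_mul_rpow_nonneg α hP fun u => comp_nonneg u y) ?_ (one_div_nonneg.2 (zero_le_one.trans hα))
  calc ∑ u, P u * channelOutput (V u) W y ^ α
      ≤ ∑ u, P u * ∑ x, V u x * W x y ^ α :=
        Finset.sum_le_sum fun u _ => mul_le_mul_of_nonneg_left
          (rpow_arith_mean_le_arith_mean_rpow Finset.univ (V u) (W · y)
            (fun x _ => (hV u).1 x) (hV u).2 (fun x _ => hW x y) hα) (hP u)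
    _ = ∑ x, channelOutput P V x * W x y ^ α :=
        channelOutput_assoc P V (fun x y => W x y ^ α) y

theorem sibsonMI_comp_le {P : U → ℝ} {V : U → X → ℝ} {W : X → Y → ℝ} (hα : 1 < α) (hP : IsPMF P)
    (hV : ∀ u, IsPMF (V u)) (hW : ∀ x, IsPMF (W x)) :
    sibsonMI α P (fun u => channelOutput (V u) W) ≤ sibsonMI α (channelOutput P V) W := by
  have coeff_nonneg : 0 ≤ α / (α - 1) :=
    div_nonneg (zero_le_one.trans hα.le) (sub_nonneg.2 hα.le)
  rw [sibsonMI_eq_log_sibsonSum, sibsonMI_eq_log_sibsonSum]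
  refine mul_le_mul_of_nonneg_left (log_le_log ?_ ?_) coeff_nonneg
  · exact sibsonSum_pos α hP fun u => (hV u).channelOutput hW
  · exact sibsonSum_comp_le hα.le hP.1 hV fun x => (hW x).1

theorem arimotoMI_eq_sibsonMI_escort (α : ℝ) {P : U → ℝ} {K : U → Y → ℝ} (hP : ∀ u, 0 ≤ P u)
    (hK : ∀ u, IsPMF (K u)) :
    arimotoMI α (fun u y => P u * K u y) = sibsonMI α (escort α P) K := by
  have marginal : ∀ u, ∑ y, P u * K u y = P u := fun u => by
    rw [← Finset.mul_sum, (hK u).2, mul_one]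
  simp only [arimotoMI, sibsonMI, marginal]
  rw [Finset.sum_div]
  congr 3 with y
  rw [sum_escort_mul_rpow α hP fun u => (hK u).1 y, div_rpow]
  · exact Finset.sum_nonneg fun u _ => rpow_nonneg (mul_nonneg (hP u) ((hK u).1 y)) α
  · exact Finset.sum_nonneg fun u _ => rpow_nonneg (hP u) α

end MutualInformation

/-- for the joint pmf on `U × Y` induced through the Markov chain
`U - X - Y`, the Arimoto mutual information is bounded by the supremum over
input distributions of the Sibson mutual information of the channel `W`. -/
theorem arimoto_le_sup_sibson {U X Y : Type}
    [Fintype U] [Fintype X] [Fintype Y] [Nonempty U] [Nonempty X] [Nonempty Y]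
    (α : ℝ) (hα : 1 < α)
    (W : X → Y → ℝ) (hW : ∀ x, IsPMF (W x))
    (PU : U → ℝ) (hPU : IsPMF PU)
    (V : U → X → ℝ) (hV : ∀ u, IsPMF (V u)) :
    arimotoMI α (fun u y => PU u * ∑ x, V u x * W x y) ≤
      sSup {v : ℝ | ∃ Q : X → ℝ, IsPMF Q ∧ v = sibsonMI α Q W} := by
  have bounded : BddAbove {v : ℝ | ∃ Q : X → ℝ, IsPMF Q ∧ v = sibsonMI α Q W} := by
    refine ⟨log (Fintype.card Y), ?_⟩
    rintro _ ⟨Q, hQ, rfl⟩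
    exact sibsonMI_le_log_card hα hQ hW
  have hE : IsPMF (escort α PU) := hPU.escort α
  calc arimotoMI α (fun u y => PU u * ∑ x, V u x * W x y)
      = sibsonMI α (escort α PU) (fun u => channelOutput (V u) W) :=
        arimotoMI_eq_sibsonMI_escort α hPU.1 fun u => (hV u).channelOutput hW
    _ ≤ sibsonMI α (channelOutput (escort α PU) V) W := sibsonMI_comp_le hα hE hV hW
    _ ≤ sSup {v : ℝ | ∃ Q : X → ℝ, IsPMF Q ∧ v = sibsonMI α Q W} :=
        le_csSup bounded ⟨_, hE.channelOutput hV, rfl⟩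
end

section
/- Let 𝒳, 𝒴 be nonempty finite sets, α ∈ (1,∞), and W a channel from 𝒳 to 𝒴. Then sup over probability mass functions Q on 𝒳 of I_α^S(Q,W) ≤ log ∑_{y∈𝒴} max_{x∈𝒳} W(y|x); that is, the maximal α-leakage is upper bounded by the maximal leakage (the Sibson mutual information of order ∞). -/
open Real BigOperators

/-- Maximal α-leakage of a channel `W`. -/
noncomputable def maxAlphaLeakage (α : ℝ) {X Y : Type} [Fintype X] [Fintype Y]
    (W : X → Y → ℝ) : ℝ :=
  sSup {v : ℝ | ∃ Q : X → ℝ, IsPMF Q ∧ v = sibsonMI α Q W}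

/-!
Let `M y` be the maximum of `W x y` over `x`, and let `p y = ∑ x, Q x * W x y` be the output pmf.
Interpolating the `L^α(Q)` norm of `W · y` between its `L¹` and `L^∞` norms bounds it by
`M y ^ (1 - 1/α) * p y ^ (1/α)`. By Hölder's inequality and `∑ y, p y = 1`, the sum over `y` is at
most `(∑ y, M y) ^ (1 - 1/α)`, and the factor `α/(α - 1)` in the Sibson mutual information is
the inverse of this exponent.
-/

section Inequalities

variable {ι : Type*} {s : Finset ι}

lemma sum_rpow_mul_rpow_le_rpow_sum_mul_rpow_sum {f g : ι → ℝ} {a b : ℝ} (ha : 0 < a) (hb : 0 < b)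
    (hab : a + b = 1) (hf : ∀ i ∈ s, 0 ≤ f i) (hg : ∀ i ∈ s, 0 ≤ g i) :
    ∑ i ∈ s, f i ^ a * g i ^ b ≤ (∑ i ∈ s, f i) ^ a * (∑ i ∈ s, g i) ^ b := by
  have holder := Real.inner_le_Lp_mul_Lq_of_nonneg s (.inv_inv ha hb hab)
    (fun i hi ↦ rpow_nonneg (hf i hi) a) (fun i hi ↦ rpow_nonneg (hg i hi) b)
  have hfa : ∑ i ∈ s, (f i ^ a) ^ a⁻¹ = ∑ i ∈ s, f i :=
    Finset.sum_congr rfl fun i hi ↦ rpow_rpow_inv (hf i hi) ha.ne'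
  have hgb : ∑ i ∈ s, (g i ^ b) ^ b⁻¹ = ∑ i ∈ s, g i :=
    Finset.sum_congr rfl fun i hi ↦ rpow_rpow_inv (hg i hi) hb.ne'
  simpa only [hfa, hgb, one_div, inv_inv] using holder

variable {q f : ι → ℝ} {C p : ℝ}

lemma sum_mul_rpow_le_rpow_sub_one_mul_sum (hp : 1 ≤ p) (hq : ∀ i ∈ s, 0 ≤ q i)
    (hf : ∀ i ∈ s, 0 ≤ f i) (hfC : ∀ i ∈ s, f i ≤ C) :
    ∑ i ∈ s, q i * f i ^ p ≤ C ^ (p - 1) * ∑ i ∈ s, q i * f i := by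
  rw [Finset.mul_sum]
  refine Finset.sum_le_sum fun i hi ↦ ?_
  have hp' : 0 ≤ p - 1 := sub_nonneg.2 hp
  calc q i * f i ^ p = f i ^ (p - 1) * (q i * f i) := by
        rw [← sub_add_cancel p 1, rpow_add_of_nonneg (hf i hi) hp' zero_le_one, rpow_one,
          add_sub_cancel_right]
        ring
    _ ≤ C ^ (p - 1) * (q i * f i) :=
        mul_le_mul_of_nonneg_right (rpow_le_rpow (hf i hi) (hfC i hi) hp')
          (mul_nonneg (hq i hi) (hf i hi))

lemma rpow_sum_mul_rpow_le_rpow_mul_rpow_sum (hp : 1 ≤ p) (hq : ∀ i ∈ s, 0 ≤ q i)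
    (hf : ∀ i ∈ s, 0 ≤ f i) (hC : 0 ≤ C) (hfC : ∀ i ∈ s, f i ≤ C) :
    (∑ i ∈ s, q i * f i ^ p) ^ (1 / p) ≤ C ^ (1 - 1 / p) * (∑ i ∈ s, q i * f i) ^ (1 / p) := by
  have hp₀ : 0 < p := zero_lt_one.trans_le hp
  have hqf : 0 ≤ ∑ i ∈ s, q i * f i :=
    Finset.sum_nonneg fun i hi ↦ mul_nonneg (hq i hi) (hf i hi)
  have hqfp : 0 ≤ ∑ i ∈ s, q i * f i ^ p :=
    Finset.sum_nonneg fun i hi ↦ mul_nonneg (hq i hi) (rpow_nonneg (hf i hi) p)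
  calc (∑ i ∈ s, q i * f i ^ p) ^ (1 / p)
      ≤ (C ^ (p - 1) * ∑ i ∈ s, q i * f i) ^ (1 / p) :=
        rpow_le_rpow hqfp (sum_mul_rpow_le_rpow_sub_one_mul_sum hp hq hf hfC) (by positivity)
    _ = C ^ ((p - 1) * (1 / p)) * (∑ i ∈ s, q i * f i) ^ (1 / p) := by
        rw [mul_rpow (rpow_nonneg hC _) hqf, ← rpow_mul hC]
    _ = C ^ (1 - 1 / p) * (∑ i ∈ s, q i * f i) ^ (1 / p) := by
        rw [sub_mul, mul_one_div_cancel hp₀.ne', one_mul]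

end Inequalities

section Channel

lemma one_le_sum_iSup {X : Type*} {Y : Type} [Finite X] [Fintype Y] {W : X → Y → ℝ} {x : X}
    (hWx : IsPMF (W x)) : 1 ≤ ∑ y, ⨆ x, W x y :=
  calc 1 = ∑ y, W x y := hWx.2.symm
    _ ≤ ∑ y, ⨆ x, W x y := Finset.sum_le_sum fun y _ ↦ Finite.le_ciSup (W · y) x

variable {X Y : Type} [Fintype X] [Fintype Y] {Q : X → ℝ} {W : X → Y → ℝ} {α : ℝ}

lemma IsPMF.exists_pos_s15 (hQ : IsPMF Q) : ∃ x, 0 < Q x := by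
  obtain ⟨x, -, hx⟩ : ∃ x ∈ Finset.univ, 0 < Q x :=
    Finset.exists_lt_of_sum_lt (by simp [hQ.2])
  exact ⟨x, hx⟩

lemma IsPMF.sum_mul (hQ : IsPMF Q) (hW : ∀ x, IsPMF (W x)) : IsPMF fun y ↦ ∑ x, Q x * W x y := by
  refine ⟨fun y ↦ Finset.sum_nonneg fun x _ ↦ mul_nonneg (hQ.1 x) ((hW x).1 y), ?_⟩
  rw [Finset.sum_comm]
  simp only [← Finset.mul_sum, (hW _).2, mul_one, hQ.2]

lemma sum_rpow_sum_mul_rpow_pos (hQ : IsPMF Q) (hW : ∀ x, IsPMF (W x)) :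
    0 < ∑ y, (∑ x, Q x * W x y ^ α) ^ (1 / α) := by
  obtain ⟨x, hQx⟩ := hQ.exists_pos_s15
  obtain ⟨y, hWxy⟩ := (hW x).exists_pos_s15
  have hterm : ∀ x y, 0 ≤ Q x * W x y ^ α :=
    fun x y ↦ mul_nonneg (hQ.1 x) (rpow_nonneg ((hW x).1 y) α)
  have hsum : 0 < ∑ x, Q x * W x y ^ α :=
    Finset.sum_pos' (fun x _ ↦ hterm x y) ⟨x, Finset.mem_univ x, by positivity⟩
  exact Finset.sum_pos' (fun y _ ↦ rpow_nonneg (Finset.sum_nonneg fun x _ ↦ hterm x y) _)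
    ⟨y, Finset.mem_univ y, rpow_pos_of_pos hsum _⟩

lemma sum_rpow_sum_mul_rpow_le_rpow_sum_iSup (hα : 1 < α) (hQ : IsPMF Q)
    (hW : ∀ x, IsPMF (W x)) :
    ∑ y, (∑ x, Q x * W x y ^ α) ^ (1 / α) ≤ (∑ y, ⨆ x, W x y) ^ (1 - 1 / α) := by
  have hα₀ : 0 < α := zero_lt_one.trans hα
  have hout : IsPMF fun y ↦ ∑ x, Q x * W x y := hQ.sum_mul hW
  have hsup : ∀ y, 0 ≤ ⨆ x, W x y := fun y ↦ Real.iSup_nonneg fun x ↦ (hW x).1 y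
  calc ∑ y, (∑ x, Q x * W x y ^ α) ^ (1 / α)
      ≤ ∑ y, (⨆ x, W x y) ^ (1 - 1 / α) * (∑ x, Q x * W x y) ^ (1 / α) :=
        Finset.sum_le_sum fun y _ ↦
          rpow_sum_mul_rpow_le_rpow_mul_rpow_sum hα.le (fun x _ ↦ hQ.1 x) (fun x _ ↦ (hW x).1 y)
            (hsup y) (fun x _ ↦ Finite.le_ciSup (W · y) x)
    _ ≤ (∑ y, ⨆ x, W x y) ^ (1 - 1 / α) * (∑ y, ∑ x, Q x * W x y) ^ (1 / α) :=
        sum_rpow_mul_rpow_le_rpow_sum_mul_rpow_sum (sub_pos.2 ((div_lt_one hα₀).2 hα))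
          (one_div_pos.2 hα₀) (sub_add_cancel 1 (1 / α)) (fun y _ ↦ hsup y) (fun y _ ↦ hout.1 y)
    _ = (∑ y, ⨆ x, W x y) ^ (1 - 1 / α) := by rw [hout.2, one_rpow, mul_one]

lemma sibsonMI_le_log_sum_iSup (hα : 1 < α) (hQ : IsPMF Q) (hW : ∀ x, IsPMF (W x)) :
    sibsonMI α Q W ≤ Real.log (∑ y, ⨆ x, W x y) := by
  have hα₀ : 0 < α := zero_lt_one.trans hα
  have hα₁ : 0 < α - 1 := sub_pos.2 hα
  obtain ⟨x, -⟩ := hQ.exists_pos_s15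
  have hsup : 0 < ∑ y, ⨆ x, W x y := zero_lt_one.trans_le (one_le_sum_iSup (hW x))
  have hlog : Real.log (∑ y, (∑ x, Q x * W x y ^ α) ^ (1 / α))
      ≤ (1 - 1 / α) * Real.log (∑ y, ⨆ x, W x y) :=
    (le_rpow_iff_log_le (sum_rpow_sum_mul_rpow_pos hQ hW) hsup).1
      (sum_rpow_sum_mul_rpow_le_rpow_sum_iSup hα hQ hW)
  calc sibsonMI α Q W
      ≤ α / (α - 1) * ((1 - 1 / α) * Real.log (∑ y, ⨆ x, W x y)) :=
        mul_le_mul_of_nonneg_left hlog (div_pos hα₀ hα₁).le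
    _ = Real.log (∑ y, ⨆ x, W x y) := by field_simp

end Channel

/-- the maximal α-leakage is upper bounded by the maximal
leakage `log ∑ y, max_x W(y|x)`. -/
theorem maxAlphaLeakage_le_maximalLeakage {X Y : Type}
    [Fintype X] [Fintype Y] [Nonempty X] [Nonempty Y]
    (α : ℝ) (hα : 1 < α)
    (W : X → Y → ℝ) (hW : ∀ x, IsPMF (W x)) :
    maxAlphaLeakage α W ≤ Real.log (∑ y, ⨆ x, W x y) := by
  classical
  obtain ⟨x₀⟩ := ‹Nonempty X›
  refine csSup_le ⟨_, Pi.single x₀ 1, single_mem_stdSimplex ℝ x₀, rfl⟩ ?_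
  rintro _ ⟨Q, hQ, rfl⟩
  exact sibsonMI_le_log_sum_iSup hα hQ hW
end
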